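/- arXiv:1901.01351 — 2 statements merged into one kernel-verified Lean document; each statement's English description precedes it below -/
import Mathlib

section
/- Let p be a prime number, let k be a field of characteristic p, and let t ∈ k be transcendental over the prime subfield 𝔽_p of k. Then the subgroup G_t := ⟨ tⁿ | n ∈ ℤ ⟩ of the additive group (k, +) generated by all integer powers of t is not finitely generated. -/
/-- Let `p` be a prime, `k` a field of characteristic `p`, and `t ∈ k`
transcendental over the prime subfield `𝔽_p`. Then the additive subgroup
`G_t = ⟨tⁿ | n ∈ ℤ⟩` of `(k, +)` is not finitely generated. -/
theorem stmt_1 (p : ℕ) [Fact p.Prime] {k : Type*} [Field k] [CharP k p]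
    (t : k)
    (ht : letI : Algebra (ZMod p) k := ZMod.algebra k p
          Transcendental (ZMod p) t) :
    ¬ (AddSubgroup.closure {x : k | ∃ n : ℤ, x = t ^ n}).FG := by
  letI : Algebra (ZMod p) k := ZMod.algebra k p
  have ht' : Transcendental (ZMod p) t := ht
  rintro ⟨S, hS⟩
  have hinj : Function.Injective (fun n : ℕ => t ^ n) := by
    intro m n h
    have h2 := (transcendental_iff_injective.mp ht')
      (a₁ := (Polynomial.X ^ m : Polynomial (ZMod p))) (a₂ := Polynomial.X ^ n) (by simpa using h)
    simpa using congrArg Polynomial.natDegree h2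
  have hmem : ∀ n : ℕ, t ^ n ∈ Submodule.span (ZMod p) (S : Set k) := by
    intro n
    have h1 : t ^ n ∈ AddSubgroup.closure (S : Set k) := by
      rw [hS]
      exact AddSubgroup.subset_closure ⟨n, by simp⟩
    have h2 : AddSubgroup.closure (S : Set k) ≤
        (Submodule.span (ZMod p) (S : Set k)).toAddSubgroup :=
      (AddSubgroup.closure_le _).mpr Submodule.subset_span
    exact h2 h1
  haveI : Module.Finite (ZMod p) (Submodule.span (ZMod p) (S : Set k)) :=
    Module.Finite.span_of_finite _ S.finite_toSet
  haveI : Finite (Submodule.span (ZMod p) (S : Set k)) := Module.finite_of_finite (ZMod p)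
  exact not_injective_infinite_finite
    (fun n : ℕ => (⟨t ^ n, hmem n⟩ : Submodule.span (ZMod p) (S : Set k)))
    (fun m n h => hinj (congrArg Subtype.val h))
end

section
/- Let p be a prime number, let k be a field of characteristic p, and let t ∈ k be transcendental over the prime subfield 𝔽_p. Let μ : k → k be the bijection x ↦ t·x and τ : k → k the bijection x ↦ x + 1. Then for every n ∈ ℤ the composite μⁿ ∘ τ ∘ μ⁻ⁿ equals the translation x ↦ x + tⁿ, and the subgroup of the group of bijections of k generated by the set { μⁿ ∘ τ ∘ μ⁻ⁿ : n ∈ ℤ } is not finitely generated. -/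
/-- Let `p` be a prime, `k` a field of characteristic `p`, and `t ∈ k`
transcendental over the prime subfield `𝔽_p`. Let `μ : k → k` be the bijection
`x ↦ t·x` and `τ : k → k` the bijection `x ↦ x + 1`. Then for every `n : ℤ`
the composite `μⁿ ∘ τ ∘ μ⁻ⁿ` is the translation `x ↦ x + tⁿ`, and the subgroup
of the permutation group of `k` generated by `{ μⁿ ∘ τ ∘ μ⁻ⁿ : n ∈ ℤ }` is not
finitely generated. -/
theorem stmt_4 (p : ℕ) [Fact p.Prime] {k : Type*} [Field k] [CharP k p]
    (t : k)
    (ht : letI : Algebra (ZMod p) k := ZMod.algebra k p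
          Transcendental (ZMod p) t)
    (μ τ : Equiv.Perm k) (hμ : ∀ x, μ x = t * x) (hτ : ∀ x, τ x = x + 1) :
    (∀ n : ℤ, ∀ x : k, (μ ^ n * τ * μ ^ (-n)) x = x + t ^ n) ∧
      ¬ (Subgroup.closure {g : Equiv.Perm k | ∃ n : ℤ, g = μ ^ n * τ * μ ^ (-n)}).FG := by
  letI : Algebra (ZMod p) k := ZMod.algebra k p
  have htt : Transcendental (ZMod p) t := ht
  have ht0 : t ≠ 0 := by
    rintro rfl
    exact htt isAlgebraic_zero
  have hinv : ∀ x, μ⁻¹ x = t⁻¹ * x := by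
    intro x
    rw [Equiv.Perm.inv_eq_iff_eq, hμ]
    field_simp
  have hpow : ∀ n : ℤ, ∀ x, (μ ^ n) x = t ^ n * x := by
    intro n
    induction n using Int.induction_on with
    | zero => intro x; simp
    | succ n ih =>
      intro x
      rw [zpow_add_one, Equiv.Perm.mul_apply, ih, hμ, zpow_add_one₀ ht0, mul_assoc]
    | pred n ih =>
      intro x
      rw [zpow_sub_one, Equiv.Perm.mul_apply, ih, hinv, zpow_sub_one₀ ht0, mul_assoc]
  have h1 : ∀ n : ℤ, ∀ x : k, (μ ^ n * τ * μ ^ (-n)) x = x + t ^ n := by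
    intro n x
    rw [Equiv.Perm.mul_apply, Equiv.Perm.mul_apply, hpow, hpow, hτ, mul_add, ← mul_assoc,
      ← zpow_add₀ ht0]
    simp
  refine ⟨h1, ?_⟩
  rintro ⟨S, hS⟩
  have htr : ∀ g ∈ Subgroup.closure {g : Equiv.Perm k | ∃ n : ℤ, g = μ ^ n * τ * μ ^ (-n)},
      ∀ x, g x = x + g 0 := by
    intro g hg
    induction hg using Subgroup.closure_induction with
    | mem g hg =>
      obtain ⟨n, rfl⟩ := hg
      intro x
      rw [h1, h1, zero_add]
    | one => intro x; simp
    | mul a b _ _ ha hb =>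
      intro x
      rw [Equiv.Perm.mul_apply, Equiv.Perm.mul_apply, ha (b x), hb x, ha (b 0)]
      ring
    | inv a _ ha =>
      intro x
      rw [Equiv.Perm.inv_eq_iff_eq, ha]
      have h := ha (a⁻¹ 0)
      rw [← Equiv.Perm.mul_apply, mul_inv_cancel, Equiv.Perm.one_apply] at h
      rw [add_assoc, ← h, add_zero]
  let V : Submodule (ZMod p) k := Submodule.span (ZMod p) (Set.image (fun g : Equiv.Perm k => g 0) (S : Set (Equiv.Perm k)))
  have hV : ∀ g ∈ Subgroup.closure (S : Set (Equiv.Perm k)), g 0 ∈ V := by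
    intro g hg
    induction hg using Subgroup.closure_induction with
    | mem g hg => exact Submodule.subset_span ⟨g, hg, rfl⟩
    | one => simp
    | mul a b hA hB ha hb =>
      rw [Equiv.Perm.mul_apply, htr a (hS ▸ hA)]
      exact V.add_mem hb ha
    | inv a hA ha =>
      have h := htr a (hS ▸ hA) (a⁻¹ 0)
      rw [← Equiv.Perm.mul_apply, mul_inv_cancel, Equiv.Perm.one_apply] at h
      rw [eq_neg_of_add_eq_zero_left h.symm]
      exact V.neg_mem ha
  have hfin : Module.Finite (ZMod p) V :=
    Module.Finite.span_of_finite (ZMod p) (S.finite_toSet.image _)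
  have hfV : Finite V := Module.finite_of_finite (ZMod p)
  have hmem : ∀ n : ℕ, t ^ n ∈ V := by
    intro n
    have h := hV (μ ^ (n : ℤ) * τ * μ ^ (-(n : ℤ)))
      (by rw [hS]; exact Subgroup.subset_closure ⟨n, rfl⟩)
    rwa [h1, zero_add, zpow_natCast] at h
  have hinj : Function.Injective (fun n : ℕ => (⟨t ^ n, hmem n⟩ : V)) := by
    intro m n hmn
    have h : t ^ m = t ^ n := congrArg Subtype.val hmn
    have h2 : (Polynomial.X ^ m : Polynomial (ZMod p)) = Polynomial.X ^ n :=
      transcendental_iff_injective.mp htt (by simpa using h)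
    simpa using congrArg Polynomial.natDegree h2
  exact not_injective_infinite_finite _ hinj
end
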